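/- For every integer a, the greatest common divisor of a⁴·(a²−1)·(a⁴−a²+1)·(a⁶−2a⁴+a³+a²−a+1) and a²+a+1 divides 21. (With t = a²−1 and s = a²(a²−1), this is the gcd of s·(1+s+t+st)·(1+√(st)+st) with a²+a+1, where √(st) = a(a²−1).) -/

import Mathlib

/-- For every integer `a`, the gcd of `a⁴(a²−1)(a⁴−a²+1)(a⁶−2a⁴+a³+a²−a+1)` and
`a²+a+1` divides `21`. -/
theorem gcd_big_product_dvd_21 (a : ℤ) :
    Int.gcd (a ^ 4 * (a ^ 2 - 1) * (a ^ 4 - a ^ 2 + 1) *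
        (a ^ 6 - 2 * a ^ 4 + a ^ 3 + a ^ 2 - a + 1)) (a ^ 2 + a + 1) ∣ 21 := by
  set P := a ^ 4 * (a ^ 2 - 1) * (a ^ 4 - a ^ 2 + 1) *
        (a ^ 6 - 2 * a ^ 4 + a ^ 3 + a ^ 2 - a + 1) with hP
  have h1 : ((Int.gcd P (a ^ 2 + a + 1) : ℕ) : ℤ) ∣ P := Int.gcd_dvd_left ..
  have h2 : ((Int.gcd P (a ^ 2 + a + 1) : ℕ) : ℤ) ∣ a ^ 2 + a + 1 := Int.gcd_dvd_right ..
  generalize Int.gcd P (a ^ 2 + a + 1) = g at h1 h2 ⊢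
  have h3 : (g : ℤ) ∣ 84 := by
    have e : (84 : ℤ) = P * (a + 5) +
        (a ^ 2 + a + 1) * (4 - (a + 5) * ((-16) * a ^ 0 + (20) * a ^ 1 + (-4) * a ^ 2 + (-16) * a ^ 3 + (19) * a ^ 4 + (-2) * a ^ 5 + (-16) * a ^ 6 + (15) * a ^ 7 + (3) * a ^ 8 + (-14) * a ^ 9 + (5) * a ^ 10 + (6) * a ^ 11 + (-4) * a ^ 12 + (-1) * a ^ 13 + (1) * a ^ 14)) := by
      rw [hP]; ring
    rw [e]
    exact dvd_add (h1.mul_right _) (h2.mul_right _)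
  have h4 : g ∣ 4 * 21 := by exact_mod_cast h3
  have h5 : ¬ 2 ∣ g := by
    intro h
    have h6 : (2 : ℤ) ∣ a ^ 2 + a + 1 := dvd_trans (by exact_mod_cast h) h2
    have h7 : Even (a * (a + 1)) := Int.even_mul_succ_self a
    obtain ⟨k, hk⟩ := h7
    have h8 : a ^ 2 + a + 1 = k + k + 1 := by rw [← hk]; ring
    rw [h8] at h6
    omega
  have h9 : Nat.Coprime g (2 ^ 2) :=
    ((Nat.Prime.coprime_iff_not_dvd Nat.prime_two).2 h5).symm.pow_right 2
  exact h9.dvd_of_dvd_mul_left h4
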